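/- Let f : B → A be a homomorphism of commutative rings and M an A-module. The assignments ρ ↦ g with g(a ⊗ m) = Σ m_0·a ⊗ m_1 (where ρ(m) = Σ m_0 ⊗ m_1), and g ↦ ρ with ρ(m) = g(1 ⊗ m), are mutually inverse bijections between: (i) the set of A-linear maps ρ : M → M ⊗_B A satisfying coassociativity Σ ρ(m_0) ⊗ m_1 = Σ m_0 ⊗ 1 ⊗ m_1 and the counit condition Σ m_0·m_1 = m; and (ii) the set of descent data on M, i.e. A ⊗_B A-module maps g : A ⊗_B M → M ⊗_B A satisfying g_2 = g_3 ∘ g_1 as maps A ⊗_B A ⊗_B M → A ⊗_B M ⊗_B A and μ_M(g(1 ⊗ m)) = m for all m ∈ M. -/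

import Mathlib

open TensorProduct

universe u

noncomputable def unitMap (B A : Type u) [CommRing B] [CommRing A] [Algebra B A]
    (N : Type u) [AddCommGroup N] [Module B N] : N →ₗ[B] N ⊗[B] A :=
  (TensorProduct.mk B N A).flip 1

/-- The action map `M ⊗_B A → M`, `m ⊗ a ↦ m · a`. -/
noncomputable def actionMap (B A : Type u) [CommRing B] [CommRing A] [Algebra B A]
    (M : Type u) [AddCommGroup M] [Module B M] [Module A M] [IsScalarTower B A M] :
    M ⊗[B] A →ₗ[B] M :=
  TensorProduct.lift (LinearMap.mk₂ B (fun m a => a • m)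
    (fun m m' a => smul_add a m m')
    (fun b m a => smul_comm a b m)
    (fun m a a' => add_smul a a' m)
    (fun b m a => smul_assoc b a m))

/-- `(M, ρ)` is a comodule over the canonical coring `A ⊗_B A`. -/
def IsCanComodule (B A : Type u) [CommRing B] [CommRing A] [Algebra B A]
    (M : Type u) [AddCommGroup M] [Module B M] [Module A M] [IsScalarTower B A M]
    (ρ : M →ₗ[B] M ⊗[B] A) : Prop :=
  (∀ (a : A) (m : M),
      ρ (a • m) = LinearMap.lTensor M (LinearMap.mulLeft B a) (ρ m)) ∧
  (∀ m : M, LinearMap.rTensor A ρ (ρ m) = LinearMap.rTensor A (unitMap B A M) (ρ m)) ∧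
  (∀ m : M, actionMap B A M (ρ m) = m)

/-- The coinvariants `M^co = {m : ρ m = m ⊗ 1}` as a `B`-submodule. -/
noncomputable def coinv (B A : Type u) [CommRing B] [CommRing A] [Algebra B A]
    (M : Type u) [AddCommGroup M] [Module B M] [Module A M] [IsScalarTower B A M]
    (ρ : M →ₗ[B] M ⊗[B] A) : Submodule B M where
  carrier := {m | ρ m = m ⊗ₜ[B] 1}
  add_mem' := by
    intro x y hx hy
    simp only [Set.mem_setOf_eq] at *
    rw [map_add, hx, hy, add_tmul]
  zero_mem' := by simp
  smul_mem' := by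
    intro b m hm
    simp only [Set.mem_setOf_eq] at *
    rw [map_smul, hm, smul_tmul']

/-- The counit map `ζ_M : M^co ⊗_B A → M`, `m ⊗ a ↦ m · a`. -/
noncomputable def counitMap (B A : Type u) [CommRing B] [CommRing A] [Algebra B A]
    (M : Type u) [AddCommGroup M] [Module B M] [Module A M] [IsScalarTower B A M]
    (ρ : M →ₗ[B] M ⊗[B] A) : (coinv B A M ρ) ⊗[B] A →ₗ[B] M :=
  actionMap B A M ∘ₗ LinearMap.rTensor A (coinv B A M ρ).subtype

section DescentData

variable (B A : Type u) [CommRing B] [CommRing A] [Algebra B A]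
variable (M : Type u) [AddCommGroup M] [Module B M] [Module A M] [IsScalarTower B A M]

/-- The action of `a : A` on `M` as a `B`-linear map. -/
noncomputable def aSmul (a : A) : M →ₗ[B] M where
  toFun m := a • m
  map_add' := smul_add a
  map_smul' b m := smul_comm a b m

/-- The action map `A ⊗_B M → M`, `a ⊗ m ↦ a • m`. -/
noncomputable def actionMapL : A ⊗[B] M →ₗ[B] M :=
  actionMap B A M ∘ₗ (TensorProduct.comm B A M).toLinearMap

/-- `g_3 ∘ g_1` for `g : A ⊗_B M → M ⊗_B A`, where `g_1` applies the identity in the first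
tensor position and `g` to the remaining two, and `g_3` applies the identity in the last
tensor position and `g` to the remaining two. -/
noncomputable def g31 (g : A ⊗[B] M →ₗ[B] M ⊗[B] A) :
    A ⊗[B] (A ⊗[B] M) →ₗ[B] (M ⊗[B] A) ⊗[B] A :=
  LinearMap.rTensor A g ∘ₗ (TensorProduct.assoc B A M A).symm.toLinearMap ∘ₗ
    LinearMap.lTensor A g

/-- `g_2` for `g : A ⊗_B M → M ⊗_B A`: the identity is applied in the middle tensor
position (which stays in the middle) and `g` is applied to the outer two positions,
with the outputs rearranged accordingly: `a ⊗ b ⊗ m ↦ Σ m' ⊗ b ⊗ a'` where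
`g(a ⊗ m) = Σ m' ⊗ a'`. -/
noncomputable def g2 (g : A ⊗[B] M →ₗ[B] M ⊗[B] A) :
    A ⊗[B] (A ⊗[B] M) →ₗ[B] (M ⊗[B] A) ⊗[B] A :=
  (TensorProduct.assoc B M A A).symm.toLinearMap ∘ₗ
    LinearMap.lTensor M (TensorProduct.comm B A A).toLinearMap ∘ₗ
    (TensorProduct.assoc B M A A).toLinearMap ∘ₗ
    LinearMap.rTensor A g ∘ₗ
    (TensorProduct.assoc B A M A).symm.toLinearMap ∘ₗ
    LinearMap.lTensor A (TensorProduct.comm B A M).toLinearMap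

/-- `g : A ⊗_B M → M ⊗_B A` is a descent datum: it is `A ⊗_B A`-linear, satisfies the
cocycle condition `g_2 = g_3 ∘ g_1`, and the normalization `μ_M (g (1 ⊗ m)) = m`. -/
noncomputable def IsDescentDatum (g : A ⊗[B] M →ₗ[B] M ⊗[B] A) : Prop :=
  (∀ (a b x : A) (m : M),
      g ((a * x) ⊗ₜ[B] (b • m)) =
        TensorProduct.map (aSmul B A M a) (LinearMap.mulLeft B b) (g (x ⊗ₜ[B] m))) ∧
  (g2 B A M g = g31 B A M g) ∧
  (∀ m : M, actionMap B A M (g ((1 : A) ⊗ₜ[B] m)) = m)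

/-- The descent datum associated to a coaction `ρ`: `g(a ⊗ m) = Σ m_0 · a ⊗ m_1`. -/
noncomputable def gOf (ρ : M →ₗ[B] M ⊗[B] A) : A ⊗[B] M →ₗ[B] M ⊗[B] A :=
  LinearMap.rTensor A (actionMapL B A M) ∘ₗ
    (TensorProduct.assoc B A M A).symm.toLinearMap ∘ₗ LinearMap.lTensor A ρ

/-- The coaction associated to a descent datum `g`: `ρ(m) = g(1 ⊗ m)`. -/
noncomputable def rhoOf (g : A ⊗[B] M →ₗ[B] M ⊗[B] A) : M →ₗ[B] M ⊗[B] A :=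
  g ∘ₗ TensorProduct.mk B A M 1

theorem gOf_tmul_aux (ρ : M →ₗ[B] M ⊗[B] A) (a : A) (m : M) :
    gOf B A M ρ (a ⊗ₜ[B] m) = LinearMap.rTensor A (aSmul B A M a) (ρ m) := by
  simp only [gOf, LinearMap.comp_apply, LinearMap.lTensor_tmul]
  generalize ρ m = t
  induction t with
  | zero => simp
  | add x y hx hy => simp only [tmul_add, map_add, hx, hy]
  | tmul x y => simp [actionMapL, actionMap, aSmul]

theorem g2_tmul_aux (g : A ⊗[B] M →ₗ[B] M ⊗[B] A) (a b : A) (m : M) :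
    g2 B A M g (a ⊗ₜ[B] (b ⊗ₜ[B] m)) =
      LinearMap.rTensor A ((TensorProduct.mk B M A).flip b) (g (a ⊗ₜ[B] m)) := by
  simp only [g2, LinearMap.comp_apply, LinearMap.lTensor_tmul, LinearEquiv.coe_coe,
    TensorProduct.comm_tmul, TensorProduct.assoc_symm_tmul, LinearMap.rTensor_tmul]
  generalize g (a ⊗ₜ[B] m) = t
  induction t with
  | zero => simp
  | add x y hx hy => simp only [add_tmul, map_add, hx, hy]
  | tmul x y => simp

theorem g31_tmul_aux (g : A ⊗[B] M →ₗ[B] M ⊗[B] A) (a b : A) (m : M) :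
    g31 B A M g (a ⊗ₜ[B] (b ⊗ₜ[B] m)) =
      LinearMap.rTensor A (g ∘ₗ TensorProduct.mk B A M a) (g (b ⊗ₜ[B] m)) := by
  simp only [g31, LinearMap.comp_apply, LinearMap.lTensor_tmul, LinearEquiv.coe_coe]
  generalize g (b ⊗ₜ[B] m) = t
  induction t with
  | zero => simp
  | add x y hx hy => simp only [tmul_add, map_add, hx, hy]
  | tmul x y => simp

theorem aSmul_one_aux : aSmul B A M 1 = LinearMap.id := by
  ext m; simp [aSmul]

/-- The assignments `ρ ↦ g` and `g ↦ ρ` are mutually inverse bijections between the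
coactions making `M` a comodule over the canonical coring and the descent data on `M`. -/
theorem comodule_equiv_descentData :
    (∀ ρ : M →ₗ[B] M ⊗[B] A, IsCanComodule B A M ρ → IsDescentDatum B A M (gOf B A M ρ)) ∧
    (∀ g : A ⊗[B] M →ₗ[B] M ⊗[B] A,
        IsDescentDatum B A M g → IsCanComodule B A M (rhoOf B A M g)) ∧
    (∀ ρ : M →ₗ[B] M ⊗[B] A, IsCanComodule B A M ρ → rhoOf B A M (gOf B A M ρ) = ρ) ∧
    (∀ g : A ⊗[B] M →ₗ[B] M ⊗[B] A,
        IsDescentDatum B A M g → gOf B A M (rhoOf B A M g) = g) := by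
  refine ⟨?_, ?_, ?_, ?_⟩
  · rintro ρ ⟨h1, h2, h3⟩
    have hlin : ∀ (a b x : A) (m : M), gOf B A M ρ ((a * x) ⊗ₜ[B] (b • m)) =
        TensorProduct.map (aSmul B A M a) (LinearMap.mulLeft B b)
          (gOf B A M ρ (x ⊗ₜ[B] m)) := by
      intro a b x m
      rw [gOf_tmul_aux, gOf_tmul_aux, h1]
      generalize ρ m = t
      induction t with
      | zero => simp
      | add x y hx hy => simp only [map_add, hx, hy]
      | tmul x y => simp [aSmul, mul_smul]
    refine ⟨hlin, ?_, ?_⟩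
    · refine TensorProduct.ext' fun a y => ?_
      induction y with
      | zero => simp
      | add x y hx hy => simp only [tmul_add, map_add, hx, hy]
      | tmul b m =>
        rw [g2_tmul_aux, g31_tmul_aux, gOf_tmul_aux, gOf_tmul_aux,
          ← LinearMap.rTensor_comp_apply, ← LinearMap.rTensor_comp_apply]
        have e : (gOf B A M ρ ∘ₗ TensorProduct.mk B A M a) ∘ₗ aSmul B A M b =
            TensorProduct.map (aSmul B A M a) (LinearMap.mulLeft B b) ∘ₗ ρ := by
          ext n
          have := hlin a b 1 n
          rw [mul_one, gOf_tmul_aux B A M ρ 1, aSmul_one_aux, LinearMap.rTensor_id] at this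
          exact this
        rw [e, LinearMap.rTensor_comp_apply A _ ρ, h2, ← LinearMap.rTensor_comp_apply]
        congr 2
        ext n
        simp [unitMap, aSmul]
    · intro m
      rw [gOf_tmul_aux, aSmul_one_aux, LinearMap.rTensor_id]
      exact h3 m
  · rintro g ⟨h1, h2, h3⟩
    refine ⟨?_, ?_, h3⟩
    · intro a m
      have := h1 1 a 1 m
      rw [mul_one, aSmul_one_aux] at this
      exact this
    · intro m
      have := LinearMap.congr_fun h2 ((1 : A) ⊗ₜ[B] ((1 : A) ⊗ₜ[B] m))
      rw [g2_tmul_aux, g31_tmul_aux] at this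
      exact this.symm
  · intro ρ _
    ext m
    simp only [rhoOf, LinearMap.comp_apply, TensorProduct.mk_apply]
    rw [gOf_tmul_aux, aSmul_one_aux, LinearMap.rTensor_id]
    rfl
  · rintro g ⟨h1, -, -⟩
    refine TensorProduct.ext' fun a m => ?_
    rw [gOf_tmul_aux]
    have := h1 a 1 1 m
    rw [mul_one, one_smul, LinearMap.mulLeft_one] at this
    exact this.symm

end DescentData
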